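/- (Askey–Wilson duality) For 0 ≤ i, j ≤ d, u_i(θ_{t+j}) = u*_j(θ*_{r+i}). -/

import Mathlib

open Matrix
open scoped Classical

noncomputable section

/-- The full setup: a `Q`-polynomial distance-regular graph `Γ = (X,R)` of diameter `D ≥ 3`,
with adjacency matrix `A`, primitive idempotents `E_i`, eigenvalues `θ_i`,
Krein parameters `q^h_{ij}`, a fixed base vertex `x`, dual primitive idempotents `E*_i`,
dual adjacency matrix `A*` and dual eigenvalues `θ*_i`. -/
structure TSetup (X : Type*) [Fintype X] [DecidableEq X] where
  G : SimpleGraph X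
  hGconn : G.Connected
  D : ℕ
  hD3 : 3 ≤ D
  hDiamLe : ∀ y z : X, G.dist y z ≤ D
  hDiamEq : ∃ y z : X, G.dist y z = D
  p : ℕ → ℕ → ℕ → ℕ
  hDRG : ∀ h i j : ℕ, h ≤ D → i ≤ D → j ≤ D → ∀ y z : X, G.dist y z = h →
    Nat.card {w : X // G.dist y w = i ∧ G.dist z w = j} = p h i j
  A : Matrix X X ℂ
  hA : ∀ y z : X, A y z = if G.Adj y z then 1 else 0
  E : ℕ → Matrix X X ℂ
  hEzero : ∀ i : ℕ, D < i → E i = 0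
  hEsum : ∑ i ∈ Finset.range (D + 1), E i = 1
  hEidem : ∀ i j : ℕ, i ≤ D → j ≤ D → E i * E j = if i = j then E i else 0
  hEsymm : ∀ i : ℕ, (E i)ᵀ = E i
  hEreal : ∀ i : ℕ, (E i).map (starRingEnd ℂ) = E i
  hE0 : E 0 = (Fintype.card X : ℂ)⁻¹ • Matrix.of (fun _ _ => (1 : ℂ))
  θ : ℕ → ℝ
  hθinj : ∀ i j : ℕ, i ≤ D → j ≤ D → θ i = θ j → i = j
  hAspec : A = ∑ i ∈ Finset.range (D + 1), (θ i : ℂ) • E i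
  q : ℕ → ℕ → ℕ → ℝ
  hKrein : ∀ i j : ℕ, i ≤ D → j ≤ D →
    Matrix.hadamard (E i) (E j) =
      (Fintype.card X : ℂ)⁻¹ • ∑ h ∈ Finset.range (D + 1), (q h i j : ℂ) • E h
  hQpoly0 : ∀ h i j : ℕ, h ≤ D → i ≤ D → j ≤ D →
    (i + j < h ∨ h + j < i ∨ h + i < j) → q h i j = 0
  hQpoly1 : ∀ h i j : ℕ, h ≤ D → i ≤ D → j ≤ D →
    (h = i + j ∨ i = h + j ∨ j = h + i) → q h i j ≠ 0
  x : X
  Estar : ℕ → Matrix X X ℂ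
  hEstarzero : ∀ i : ℕ, D < i → Estar i = 0
  hEstar : ∀ i : ℕ, i ≤ D → ∀ y z : X,
    Estar i y z = if y = z ∧ G.dist x y = i then 1 else 0
  Astar : Matrix X X ℂ
  hAstar : ∀ y z : X, Astar y z = if y = z then (Fintype.card X : ℂ) * E 1 x y else 0
  θstar : ℕ → ℝ
  hθstarinj : ∀ i j : ℕ, i ≤ D → j ≤ D → θstar i = θstar j → i = j
  hAstarspec : Astar = ∑ i ∈ Finset.range (D + 1), (θstar i : ℂ) • Estar i

variable {X : Type*} [Fintype X] [DecidableEq X]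

/-- The Terwilliger algebra `T = T(x)`, generated by `A` and `A*`. -/
def TSetup.T (S : TSetup X) : Subalgebra ℂ (Matrix X X ℂ) :=
  Algebra.adjoin ℂ {S.A, S.Astar}

/-- A thin irreducible `T`-module `W` with endpoint `r`, dual endpoint `t` and diameter `d`,
where `E*_i W ≠ 0` iff `r ≤ i ≤ r + d` and `E_i W ≠ 0` iff `t ≤ i ≤ t + d`. -/
structure TMod (S : TSetup X) where
  W : Submodule ℂ (X → ℂ)
  hWinv : ∀ B ∈ S.T, ∀ w ∈ W, B *ᵥ w ∈ W
  hWne : W ≠ ⊥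
  hWirr : ∀ U : Submodule ℂ (X → ℂ), U ≤ W →
    (∀ B ∈ S.T, ∀ w ∈ U, B *ᵥ w ∈ U) → U = ⊥ ∨ U = W
  hthin : ∀ i : ℕ, Module.finrank ℂ (W.map (S.Estar i).mulVecLin) ≤ 1
  r : ℕ
  t : ℕ
  d : ℕ
  hr : ∀ i : ℕ, W.map (S.Estar i).mulVecLin ≠ ⊥ ↔ r ≤ i ∧ i ≤ r + d
  ht : ∀ i : ℕ, W.map (S.E i).mulVecLin ≠ ⊥ ↔ t ≤ i ∧ i ≤ t + d

open Classical in
/-- The action of a matrix `B` on `W` (the restriction of `B` to `W`; defined to be `0`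
if `B` does not leave `W` invariant). -/
def actW (S : TSetup X) (M : TMod S) (B : Matrix X X ℂ) : M.W →ₗ[ℂ] M.W :=
  if h : ∀ w ∈ M.W, B.mulVecLin w ∈ M.W then B.mulVecLin.restrict h else 0

/-- `tr_W(B)`: the trace of the action of `B` on `W`. -/
def trW (S : TSetup X) (M : TMod S) (B : Matrix X X ℂ) : ℂ :=
  LinearMap.trace ℂ M.W (actW S M B)

/-- `a_i(W) = tr_W(E*_{r+i} A)`. -/
def aW (S : TSetup X) (M : TMod S) (i : ℕ) : ℂ :=
  trW S M (S.Estar (M.r + i) * S.A)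

/-- `x_i(W) = tr_W(E*_{r+i} A E*_{r+i-1} A)`, with `x_0(W) = 0`. -/
def xW (S : TSetup X) (M : TMod S) (i : ℕ) : ℂ :=
  if i = 0 then 0 else trW S M (S.Estar (M.r + i) * S.A * S.Estar (M.r + i - 1) * S.A)

/-- `a*_i(W) = tr_W(E_{t+i} A*)`. -/
def astarW (S : TSetup X) (M : TMod S) (i : ℕ) : ℂ :=
  trW S M (S.E (M.t + i) * S.Astar)

/-- `x*_i(W) = tr_W(E_{t+i} A* E_{t+i-1} A*)`, with `x*_0(W) = 0`. -/
def xstarW (S : TSetup X) (M : TMod S) (i : ℕ) : ℂ :=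
  if i = 0 then 0 else trW S M (S.E (M.t + i) * S.Astar * S.E (M.t + i - 1) * S.Astar)

/-- The polynomials `p_i`: `p_0 = 1`, `p_{-1} = 0`,
`λ p_i = p_{i+1} + a_i(W) p_i + x_i(W) p_{i-1}`. -/
def pW (S : TSetup X) (M : TMod S) : ℕ → Polynomial ℂ
  | 0 => 1
  | 1 => Polynomial.X - Polynomial.C (aW S M 0)
  | (n + 2) =>
      (Polynomial.X - Polynomial.C (aW S M (n + 1))) * pW S M (n + 1)
        - Polynomial.C (xW S M (n + 1)) * pW S M n

/-- The polynomials `p*_i`: `p*_0 = 1`, `p*_{-1} = 0`,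
`λ p*_i = p*_{i+1} + a*_i(W) p*_i + x*_i(W) p*_{i-1}`. -/
def pstarW (S : TSetup X) (M : TMod S) : ℕ → Polynomial ℂ
  | 0 => 1
  | 1 => Polynomial.X - Polynomial.C (astarW S M 0)
  | (n + 2) =>
      (Polynomial.X - Polynomial.C (astarW S M (n + 1))) * pstarW S M (n + 1)
        - Polynomial.C (xstarW S M (n + 1)) * pstarW S M n

/-- The Hermitian inner product `⟨u,v⟩ = Σ_y u_y conj(v_y)` on `ℂ^X`. -/
def herm (u v : X → ℂ) : ℂ := ∑ y, u y * (starRingEnd ℂ) (v y)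

/-- `ν(W)`, the multiplicative inverse of `m_0(W) = tr_W(E_t E*_r)`. -/
def nuW (S : TSetup X) (M : TMod S) : ℂ :=
  (trW S M (S.E M.t * S.Estar M.r))⁻¹

/-- `k_i(W) = ν(W) m*_i(W)` where `m*_i(W) = tr_W(E*_{r+i} E_t)`. -/
def kW (S : TSetup X) (M : TMod S) (i : ℕ) : ℂ :=
  nuW S M * trW S M (S.Estar (M.r + i) * S.E M.t)

/-- `k*_i(W) = ν(W) m_i(W)` where `m_i(W) = tr_W(E_{t+i} E*_r)`. -/
def kstarW (S : TSetup X) (M : TMod S) (i : ℕ) : ℂ :=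
  nuW S M * trW S M (S.E (M.t + i) * S.Estar M.r)


namespace AWD

/-- Idempotent families: the idempotents lie in any subalgebra containing the matrix. -/
lemma idem_mem (D : ℕ) (F : ℕ → Matrix X X ℂ) (θ : ℕ → ℝ)
    (hsum : ∑ i ∈ Finset.range (D + 1), F i = 1)
    (hidem : ∀ i j : ℕ, i ≤ D → j ≤ D → F i * F j = if i = j then F i else 0)
    (hinj : ∀ i j : ℕ, i ≤ D → j ≤ D → θ i = θ j → i = j)
    (B : Matrix X X ℂ) (hB : B = ∑ i ∈ Finset.range (D + 1), (θ i : ℂ) • F i)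
    (T : Subalgebra ℂ (Matrix X X ℂ)) (hBT : B ∈ T) (k : ℕ) (hk : k ≤ D) : F k ∈ T := by
  have hmul : ∀ i, i ≤ D → B * F i = (θ i : ℂ) • F i := by
    intro i hi
    rw [hB, Finset.sum_mul, Finset.sum_eq_single i]
    · simp [hidem i i hi hi]
    · intro b hb hbi
      simp only [Finset.mem_range] at hb
      simp [hidem b i (by omega) hi, hbi]
    · intro h; simp only [Finset.mem_range] at h; omega
  have hev : ∀ (q : Polynomial ℂ) (i : ℕ), i ≤ D →
      Polynomial.aeval B q * F i = q.eval (θ i : ℂ) • F i := by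
    intro q i hi
    induction q using Polynomial.induction_on' with
    | add p q hp hq => simp [add_mul, hp, hq, add_smul]
    | monomial n a =>
      simp only [Polynomial.aeval_monomial, Polynomial.eval_monomial]
      have : ∀ n : ℕ, B ^ n * F i = ((θ i : ℂ) ^ n) • F i := by
        intro n
        induction n with
        | zero => simp
        | succ n ih => rw [pow_succ, mul_assoc, hmul i hi, mul_smul_comm, ih, smul_smul, pow_succ, mul_comm]
      rw [mul_assoc, this, Algebra.algebraMap_eq_smul_one, smul_mul_assoc, one_mul, smul_smul]
  have hinjC : Set.InjOn (fun i => (θ i : ℂ)) (Finset.range (D + 1) : Finset ℕ) := by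
    intro a ha b hb hab
    simp only [Finset.coe_range, Set.mem_Iio] at ha hb
    exact hinj a b (by omega) (by omega) (Complex.ofReal_injective hab)
  have hkm : k ∈ Finset.range (D + 1) := by simp; omega
  have key : F k = Polynomial.aeval B (Lagrange.basis (Finset.range (D + 1)) (fun i => (θ i : ℂ)) k) := by
    conv_rhs => rw [← mul_one (Polynomial.aeval B _), ← hsum, Finset.mul_sum]
    rw [Finset.sum_eq_single k]
    · rw [hev _ k hk, Lagrange.eval_basis_self hinjC hkm, one_smul]
    · intro b hb hbk
      have hb' := hb
      simp only [Finset.mem_range] at hb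
      have h0 := Lagrange.eval_basis_of_ne (v := fun i => (θ i : ℂ)) (Ne.symm hbk) hb'
      rw [hev _ b (by omega), h0, zero_smul]
    · intro h; exact absurd hkm h
  rw [key]
  rw [Polynomial.aeval_eq_sum_range]
  exact Subalgebra.sum_mem _ fun i _ => Subalgebra.smul_mem _ (Subalgebra.pow_mem _ hBT i) _

lemma scalar_rec (d : ℕ) (a x p P : ℕ → ℂ) (th : ℂ) (Q : ℕ → ℕ → ℂ)
    (hp0 : p 0 = 1) (hp1 : p 1 = th - a 0)
    (hp : ∀ n, p (n + 2) = (th - a (n + 1)) * p (n + 1) - x (n + 1) * p n)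
    (ha : ∀ i ≤ d, a i = Q i i)
    (hx : ∀ n, n + 1 ≤ d → x (n + 1) = Q n (n + 1) * Q (n + 1) n)
    (htri : ∀ i j, i ≤ d → j ≤ d → (i + 1 < j ∨ j + 1 < i) → Q i j = 0)
    (hP : ∀ i ≤ d, th * P i = ∑ k ∈ Finset.range (d + 1), Q i k * P k) :
    ∀ i ≤ d, (∏ k ∈ Finset.range i, Q k (k + 1)) * P i = p i * P 0 := by
  have h0 : 1 ≤ d → th * P 0 = Q 0 1 * P 1 + a 0 * P 0 := by
    intro hd
    rw [hP 0 (by omega), ha 0 (by omega)]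
    rw [← Finset.sum_subset (s₁ := {0, 1})]
    · simp [add_comm]
    · intro k; simp; omega
    · intro k hk hk'
      simp at hk hk'
      rw [htri 0 k (by omega) (by omega) (by omega), zero_mul]
  have h1 : ∀ n, n + 2 ≤ d → th * P (n + 1) =
      Q (n + 1) (n + 2) * P (n + 2) + a (n + 1) * P (n + 1) + Q (n + 1) n * P n := by
    intro n hn
    rw [hP (n + 1) (by omega), ha (n + 1) (by omega)]
    rw [← Finset.sum_subset (s₁ := {n, n + 1, n + 2})]
    · rw [Finset.sum_insert (by simp), Finset.sum_insert (by simp), Finset.sum_singleton]; ring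
    · intro k; simp; omega
    · intro k hk hk'
      simp at hk hk'
      rw [htri (n + 1) k (by omega) (by omega) (by omega), zero_mul]
  intro i
  induction i using Nat.strong_induction_on with
  | _ i ih =>
    intro hi
    match i, ih, hi with
    | 0, _, _ => simp [hp0]
    | 1, _, hi =>
      have := h0 hi
      simp only [Finset.prod_range_one, hp1]
      linear_combination -this
    | n + 2, ih, hi =>
      have e1 := ih (n + 1) (by omega) (by omega)
      have e0 := ih n (by omega) (by omega)
      have e2 := h1 n hi
      rw [Finset.prod_range_succ, hp]
      rw [Finset.prod_range_succ] at e1 ⊢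
      rw [hx n (by omega)]
      linear_combination (th - a (n + 1)) * e1 - Q n (n + 1) * Q (n + 1) n * e0
        - (∏ k ∈ Finset.range n, Q k (k + 1)) * Q n (n + 1) * e2

section Abstract
variable {V : Type*} [AddCommGroup V] [Module ℂ V] [FiniteDimensional ℂ V]

lemma exists_basis (F : ℕ → Module.End ℂ V) (B C : Module.End ℂ V) (r d : ℕ) (th : ℕ → ℂ)
    (horth : ∀ i j, F i * F j = if i = j then F i else 0)
    (hne : ∀ i ≤ d, F (r + i) ≠ 0)
    (hfin : Module.finrank ℂ V = d + 1)
    (htri : ∀ i j, (i + 1 < j ∨ j + 1 < i) → F i * B * F j = 0)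
    (hC : ∀ i, C * F i = th i • F i)
    (hirr : ∀ U : Submodule ℂ V, (∀ w ∈ U, B w ∈ U) → (∀ w ∈ U, C w ∈ U) → U = ⊥ ∨ U = ⊤) :
    ∃ (v : Module.Basis (Fin (d + 1)) ℂ V) (N : ℕ → ℕ → ℂ),
      (∀ j : Fin (d + 1), C (v j) = th (r + j) • v j) ∧
      (∀ j : Fin (d + 1), B (v j) = ∑ k : Fin (d + 1), N k j • v k) ∧
      (∀ i ≤ d, LinearMap.trace ℂ V (F (r + i) * B) = N i i) ∧
      (∀ i, i + 1 ≤ d → LinearMap.trace ℂ V (F (r + (i + 1)) * B * F (r + i) * B)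
        = N (i + 1) i * N i (i + 1)) ∧
      (∀ i j, i ≤ d → j ≤ d → (i + 1 < j ∨ j + 1 < i) → N i j = 0) ∧
      (∀ i, i + 1 ≤ d → N (i + 1) i ≠ 0 ∧ N i (i + 1) ≠ 0) := by
  have hex : ∀ i : Fin (d + 1), ∃ w : V, w ≠ 0 ∧ F (r + i) w = w := by
    intro i
    have := hne i (by omega)
    obtain ⟨w, hw⟩ : ∃ w, F (r + i) w ≠ 0 := by
      by_contra! h
      exact this (LinearMap.ext h)
    refine ⟨F (r + i) w, hw, ?_⟩
    have h2 := horth (r + i) (r + i)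
    simp only [if_true] at h2
    exact congrArg (fun f => f w) h2
  choose v0 hv0 hFv0 using hex
  have hF : ∀ i j : Fin (d + 1), F (r + i) (v0 j) = if i = j then v0 j else 0 := by
    intro i j
    have h2 := congrArg (fun f => f (v0 j)) (horth (r + i) (r + j))
    simp only [Module.End.mul_apply, hFv0] at h2
    rw [h2]
    by_cases hij : i = j
    · subst hij; simp [hFv0]
    · have : ¬ (r + (i : ℕ) = r + j) := by
        intro h; apply hij; apply Fin.ext; omega
      rw [if_neg this, if_neg hij]; simp
  have hli : LinearIndependent ℂ v0 := by
    rw [Fintype.linearIndependent_iff]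
    intro g hg i
    have := congrArg (F (r + i)) hg
    simp only [map_sum, map_smul, hF, map_zero] at this
    simpa [hv0] using this
  let v : Module.Basis (Fin (d + 1)) ℂ V := basisOfLinearIndependentOfCardEqFinrank hli (by simp [hfin])
  have hv : ∀ i, v i = v0 i := by intro i; simp [v]
  let N : Matrix (Fin (d + 1)) (Fin (d + 1)) ℂ := LinearMap.toMatrix v v B
  have hFm : ∀ i : Fin (d + 1), LinearMap.toMatrix v v (F (r + i)) = Matrix.single i i 1 := by
    intro i
    ext a b
    rw [LinearMap.toMatrix_apply, hv, hF, ← hv]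
    by_cases hib : i = b
    · subst hib
      by_cases hia : i = a
      · subst hia; simp
      · simp [Matrix.single, hia, Finsupp.single_apply]
    · simp [hib, Matrix.single]
  have hof : ∀ k : Fin (d + 1), Fin.ofNat (d + 1) (k : ℕ) = k := by intro k; simp
  have hBv : ∀ j : Fin (d + 1), B (v j) = ∑ k : Fin (d + 1), N k j • v k := by
    intro j
    conv_lhs => rw [← v.sum_repr (B (v j))]
    simp only [N, LinearMap.toMatrix_apply]
  have hCv : ∀ j : Fin (d + 1), C (v j) = th (r + j) • v j := by
    intro j
    have := congrArg (fun f => f (v0 j)) (hC (r + j))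
    simp only [Module.End.mul_apply, hFv0, LinearMap.smul_apply] at this
    rw [hv]; exact this
  have hNtri : ∀ i j : Fin (d + 1), ((i : ℕ) + 1 < j ∨ (j : ℕ) + 1 < i) → N i j = 0 := by
    intro i j hij
    have h := congrArg (LinearMap.toMatrix v v) (htri (r + i) (r + j) (by omega))
    rw [LinearMap.toMatrix_mul, LinearMap.toMatrix_mul, hFm, hFm, map_zero] at h
    have := congrFun (congrFun h i) j
    simpa [N] using this
  have hset : ∀ s : Set (Fin (d + 1)), (∀ k l, l ∈ s → k ∉ s → N k l = 0) → s = ∅ ∨ s = Set.univ := by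
    intro s hs
    have h := hirr (Submodule.span ℂ (v '' s)) ?_ ?_
    · rcases h with h | h
      · left
        rw [Submodule.span_eq_bot] at h
        by_contra hne
        obtain ⟨k, hk⟩ := Set.nonempty_iff_ne_empty.mpr hne
        exact v.ne_zero k (h _ ⟨k, hk, rfl⟩)
      · right
        ext k
        simp only [Set.mem_univ, iff_true]
        have : v k ∈ Submodule.span ℂ (v '' s) := by rw [h]; trivial
        by_contra hk
        exact v.linearIndependent.notMem_span_image hk this
    · intro w hw
      induction hw using Submodule.span_induction with
      | mem w hw =>
        obtain ⟨l, hl, rfl⟩ := hw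
        rw [hBv]
        refine Submodule.sum_mem _ fun k _ => ?_
        by_cases hk : k ∈ s
        · exact Submodule.smul_mem _ _ (Submodule.subset_span ⟨k, hk, rfl⟩)
        · simp [hs k l hl hk]
      | zero => simp
      | add a b _ _ ha hb => rw [map_add]; exact Submodule.add_mem _ ha hb
      | smul c a _ ha => rw [map_smul]; exact Submodule.smul_mem _ _ ha
    · intro w hw
      induction hw using Submodule.span_induction with
      | mem w hw =>
        obtain ⟨l, hl, rfl⟩ := hw
        rw [hCv]
        exact Submodule.smul_mem _ _ (Submodule.subset_span ⟨l, hl, rfl⟩)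
      | zero => simp
      | add a b _ _ ha hb => rw [map_add]; exact Submodule.add_mem _ ha hb
      | smul c a _ ha => rw [map_smul]; exact Submodule.smul_mem _ _ ha
  have hlift : ∀ i, i ≤ d → ((Fin.ofNat (d + 1) i : Fin (d + 1)) : ℕ) = i := by
    intro i hi
    simp [Fin.ofNat, Nat.mod_eq_of_lt (show i < d + 1 by omega)]
  refine ⟨v, fun i j => N (Fin.ofNat _ i) (Fin.ofNat _ j), hCv, ?_, ?_, ?_, ?_, ?_⟩
  · intro j
    simp only [hof]
    exact hBv j
  · intro i hi
    rw [LinearMap.trace_eq_matrix_trace ℂ v, LinearMap.toMatrix_mul]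
    conv_lhs => rw [← hlift i hi]
    rw [hFm]
    simp [Matrix.trace_single_mul, N]
  · intro i hi
    rw [LinearMap.trace_eq_matrix_trace ℂ v, LinearMap.toMatrix_mul, LinearMap.toMatrix_mul,
      LinearMap.toMatrix_mul]
    have e1 := hFm (Fin.ofNat _ i)
    have e2 := hFm (Fin.ofNat _ (i + 1))
    rw [hlift i (by omega)] at e1
    rw [hlift (i + 1) (by omega)] at e2
    rw [e1, e2, mul_assoc, mul_assoc, Matrix.trace_single_mul, ← mul_assoc]
    have e3 : ∀ a b : Fin (d + 1), (N * (Matrix.single a a 1 : Matrix (Fin (d + 1)) (Fin (d + 1)) ℂ) * N) b b = N b a * N a b := by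
      intro a b
      rw [Matrix.mul_apply, Finset.sum_eq_single a]
      · simp
      · intro k _ hk
        simp [hk]
      · simp
    rw [one_smul]
    exact e3 _ _
  · intro i j hi hj hij
    exact hNtri _ _ (by rw [hlift i hi, hlift j hj]; exact hij)
  · intro i hi
    constructor
    · intro h0
      have hs : ∀ k l : Fin (d + 1), l ∈ ({k | (k : ℕ) ≤ i} : Set (Fin (d + 1))) →
          k ∉ ({k | (k : ℕ) ≤ i} : Set (Fin (d + 1))) → N k l = 0 := by
        intro k l hl hk
        simp only [Set.mem_setOf_eq] at hl hk
        by_cases h1 : (l : ℕ) + 1 < k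
        · exact hNtri k l (Or.inr h1)
        · have ek : (k : ℕ) = i + 1 := by omega
          have el : (l : ℕ) = i := by omega
          rw [← ek, ← el] at h0
          simpa only [hof] using h0
      rcases hset {k | (k : ℕ) ≤ i} hs with h | h
      · have : (0 : Fin (d + 1)) ∈ ({k | (k : ℕ) ≤ i} : Set (Fin (d + 1))) := by simp
        rw [h] at this; exact this
      · have : Fin.last d ∈ ({k | (k : ℕ) ≤ i} : Set (Fin (d + 1))) := by rw [h]; trivial
        simp at this; omega
    · intro h0
      have hs : ∀ k l : Fin (d + 1), l ∈ ({k | i < (k : ℕ)} : Set (Fin (d + 1))) →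
          k ∉ ({k | i < (k : ℕ)} : Set (Fin (d + 1))) → N k l = 0 := by
        intro k l hl hk
        simp only [Set.mem_setOf_eq] at hl hk
        by_cases h1 : (k : ℕ) + 1 < l
        · exact hNtri k l (Or.inl h1)
        · have ek : (l : ℕ) = i + 1 := by omega
          have el : (k : ℕ) = i := by omega
          rw [← ek, ← el] at h0
          simpa only [hof] using h0
      rcases hset {k | i < (k : ℕ)} hs with h | h
      · have : Fin.last d ∈ ({k | i < (k : ℕ)} : Set (Fin (d + 1))) := by simp; omega
        rw [h] at this; exact this
      · have : (0 : Fin (d + 1)) ∈ ({k | i < (k : ℕ)} : Set (Fin (d + 1))) := by rw [h]; trivial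
        simp at this

end Abstract

/-- Triple product relation -/
lemma E_Astar_E (S : TSetup X) (i j : ℕ) (hij : i + 1 < j ∨ j + 1 < i) :
    S.E i * S.Astar * S.E j = 0 := by
  by_cases hi : i ≤ S.D
  swap
  · rw [S.hEzero i (by omega)]; simp
  by_cases hj : j ≤ S.D
  swap
  · rw [S.hEzero j (by omega)]; simp
  have hD := S.hD3
  have hH : ∀ k, (S.E k)ᴴ = S.E k := by
    intro k
    have h1 := S.hEreal k
    have h2 := S.hEsymm k
    rw [← h2] at h1
    exact h1.trans h2
  have hAdiag : S.Astar = Matrix.diagonal (fun y => (Fintype.card X : ℂ) * S.E 1 S.x y) := by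
    ext y z
    rw [S.hAstar, Matrix.diagonal_apply]
  have hre : ∀ k y z, (starRingEnd ℂ) (S.E k y z) = S.E k y z := by
    intro k y z
    exact congrFun (congrFun (S.hEreal k) y) z
  have hAH : S.Astarᴴ = S.Astar := by
    rw [hAdiag, Matrix.diagonal_conjTranspose]
    congr 1
    ext y
    simp [hre]
  have hsq : ∀ k, k ≤ S.D → S.E k * S.E k = S.E k := by
    intro k hk; rw [S.hEidem k k hk hk, if_pos rfl]
  open scoped ComplexOrder in rw [← Matrix.trace_mul_conjTranspose_self_eq_zero_iff]
  rw [Matrix.conjTranspose_mul, Matrix.conjTranspose_mul, hH, hH, hAH]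
  have e1 : S.E i * S.Astar * S.E j * (S.E j * (S.Astar * S.E i)) =
      S.E i * (S.Astar * (S.E j * S.Astar * S.E i)) := by
    calc _ = S.E i * S.Astar * (S.E j * S.E j) * (S.Astar * S.E i) := by simp only [mul_assoc]
      _ = _ := by rw [hsq j hj]; simp only [mul_assoc]
  rw [e1, Matrix.trace_mul_comm]
  have e2 : S.Astar * (S.E j * S.Astar * S.E i) * S.E i = S.Astar * (S.E j * S.Astar * S.E i) := by
    calc _ = S.Astar * (S.E j * S.Astar * (S.E i * S.E i)) := by simp only [mul_assoc]
      _ = _ := by rw [hsq i hi]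
  rw [e2]
  have hsym : ∀ k y z, S.E k y z = S.E k z y := by
    intro k y z
    exact congrFun (congrFun (S.hEsymm k) z) y
  have e3 : (S.Astar * (S.E j * S.Astar * S.E i)).trace =
      (Fintype.card X : ℂ) ^ 2 * (S.E 1 * (Matrix.hadamard (S.E i) (S.E j)) * S.E 1) S.x S.x := by
    rw [hAdiag, Matrix.trace]
    simp only [Matrix.diag_apply, Matrix.diagonal_mul]
    simp only [Matrix.mul_apply (M := _ * Matrix.diagonal _), Matrix.mul_diagonal]
    simp only [Matrix.mul_apply, Matrix.hadamard_apply, Finset.mul_sum, Finset.sum_mul]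
    rw [Finset.sum_comm]
    refine Finset.sum_congr rfl fun y _ => Finset.sum_congr rfl fun z _ => ?_
    rw [hsym i y z, hsym 1 y S.x]
    ring
  rw [e3, S.hKrein i j hi hj]
  have e4 : S.E 1 * ((Fintype.card X : ℂ)⁻¹ • ∑ h ∈ Finset.range (S.D + 1), (S.q h i j : ℂ) • S.E h)
      * S.E 1 = 0 := by
    rw [mul_smul_comm, Finset.mul_sum, smul_mul_assoc, Finset.sum_mul, Finset.sum_eq_zero, smul_zero]
    intro h hh
    simp only [Finset.mem_range] at hh
    rw [mul_smul_comm, S.hEidem 1 h (by omega) (by omega)]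
    by_cases h1 : 1 = h
    · subst h1
      rw [S.hQpoly0 1 i j (by omega) hi hj (by omega)]
      simp
    · simp [h1]
  rw [e4]; simp

lemma Estar_A_Estar (S : TSetup X) (i j : ℕ) (hij : i + 1 < j ∨ j + 1 < i) :
    S.Estar i * S.A * S.Estar j = 0 := by
  by_cases hi : i ≤ S.D
  swap
  · rw [S.hEstarzero i (by omega)]; simp
  by_cases hj : j ≤ S.D
  swap
  · rw [S.hEstarzero j (by omega)]; simp
  have hd : ∀ i, i ≤ S.D → S.Estar i =
      Matrix.diagonal (fun y => if S.G.dist S.x y = i then (1 : ℂ) else 0) := by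
    intro i hi
    ext y z
    rw [S.hEstar i hi, Matrix.diagonal_apply]
    by_cases h : y = z <;> simp [h]
  rw [hd i hi, hd j hj]
  ext y z
  rw [Matrix.mul_diagonal, Matrix.diagonal_mul, S.hA]
  simp only [Matrix.zero_apply]
  by_cases h1 : S.G.dist S.x y = i
  swap
  · simp [h1]
  by_cases h2 : S.G.dist S.x z = j
  swap
  · simp [h2]
  by_cases h3 : S.G.Adj y z
  swap
  · simp [h3]
  exfalso
  have hyz := SimpleGraph.dist_eq_one_iff_adj.mpr h3
  have hzy := SimpleGraph.dist_eq_one_iff_adj.mpr h3.symm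
  have t1 := S.hGconn.dist_triangle (u := S.x) (v := y) (w := z)
  have t2 := S.hGconn.dist_triangle (u := S.x) (v := z) (w := y)
  omega

lemma Estar_idem (S : TSetup X) (i j : ℕ) :
    S.Estar i * S.Estar j = if i = j then S.Estar i else 0 := by
  by_cases hi : i ≤ S.D
  swap
  · rw [S.hEstarzero i (by omega)]; simp
  by_cases hj : j ≤ S.D
  swap
  · rw [S.hEstarzero j (by omega), if_neg (by omega)]; simp
  have hd : ∀ i, i ≤ S.D → S.Estar i =
      Matrix.diagonal (fun y => if S.G.dist S.x y = i then (1 : ℂ) else 0) := by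
    intro i hi
    ext y z
    rw [S.hEstar i hi, Matrix.diagonal_apply]
    by_cases h : y = z <;> simp [h]
  rw [hd i hi, hd j hj, Matrix.diagonal_mul_diagonal]
  split_ifs with h
  · subst h; congr 1; ext y; simp
  · rw [← Matrix.diagonal_zero]; congr 1; ext y
    by_cases h1 : S.G.dist S.x y = i
    · simp [h1, h]
    · simp [h1]

lemma Estar_sum (S : TSetup X) : ∑ i ∈ Finset.range (S.D + 1), S.Estar i = 1 := by
  ext y z
  rw [Matrix.sum_apply, Finset.sum_congr rfl (fun i hi => S.hEstar i (by simp at hi; omega) y z),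
    Matrix.one_apply]
  by_cases h : y = z
  · have := S.hDiamLe S.x y
    simp [h]
    subst h; omega
  · simp [h]

lemma E_idem (S : TSetup X) (i j : ℕ) :
    S.E i * S.E j = if i = j then S.E i else 0 := by
  by_cases hi : i ≤ S.D
  swap
  · rw [S.hEzero i (by omega)]; simp
  by_cases hj : j ≤ S.D
  swap
  · rw [S.hEzero j (by omega), if_neg (by omega)]; simp
  exact S.hEidem i j hi hj

lemma A_mem (S : TSetup X) : S.A ∈ S.T := Algebra.subset_adjoin (by simp)
lemma Astar_mem (S : TSetup X) : S.Astar ∈ S.T := Algebra.subset_adjoin (by simp)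

lemma E_mem (S : TSetup X) (i : ℕ) : S.E i ∈ S.T := by
  by_cases hi : i ≤ S.D
  · exact idem_mem S.D S.E S.θ S.hEsum S.hEidem S.hθinj S.A S.hAspec S.T (A_mem S) i hi
  · rw [S.hEzero i (by omega)]; exact Subalgebra.zero_mem _

lemma Estar_mem (S : TSetup X) (i : ℕ) : S.Estar i ∈ S.T := by
  by_cases hi : i ≤ S.D
  · exact idem_mem S.D S.Estar S.θstar (Estar_sum S) (fun i j _ _ => Estar_idem S i j) S.hθstarinj
      S.Astar S.hAstarspec S.T (Astar_mem S) i hi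
  · rw [S.hEstarzero i (by omega)]; exact Subalgebra.zero_mem _

lemma spec_mul (D : ℕ) (F : ℕ → Matrix X X ℂ) (θ : ℕ → ℝ)
    (hidem : ∀ i j : ℕ, F i * F j = if i = j then F i else 0)
    (hz : ∀ i, D < i → F i = 0)
    (B : Matrix X X ℂ) (hB : B = ∑ i ∈ Finset.range (D + 1), (θ i : ℂ) • F i) (i : ℕ) :
    B * F i = (θ i : ℂ) • F i := by
  by_cases hi : i ≤ D
  swap
  · rw [hz i (by omega)]; simp
  rw [hB, Finset.sum_mul, Finset.sum_eq_single i]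
  · simp [hidem i i]
  · intro b hb hbi
    simp [hidem b i, hbi]
  · intro h; simp only [Finset.mem_range] at h; omega

lemma actW_apply (S : TSetup X) (M : TMod S) {B : Matrix X X ℂ} (hB : B ∈ S.T) (w : M.W) :
    (actW S M B w : X → ℂ) = B *ᵥ (w : X → ℂ) := by
  have h : ∀ w ∈ M.W, B.mulVecLin w ∈ M.W := fun w hw => M.hWinv B hB w hw
  unfold actW
  rw [dif_pos h]
  rfl

lemma actW_mul (S : TSetup X) (M : TMod S) {B C : Matrix X X ℂ} (hB : B ∈ S.T) (hC : C ∈ S.T) :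
    actW S M (B * C) = actW S M B * actW S M C := by
  ext1 w
  apply Subtype.ext
  rw [Module.End.mul_apply, actW_apply S M (Subalgebra.mul_mem _ hB hC), actW_apply S M hB,
    actW_apply S M hC, Matrix.mulVec_mulVec]

lemma actW_zero (S : TSetup X) (M : TMod S) : actW S M 0 = 0 := by
  ext1 w
  apply Subtype.ext
  rw [actW_apply S M (Subalgebra.zero_mem _)]
  simp

lemma actW_smul (S : TSetup X) (M : TMod S) {B : Matrix X X ℂ} (hB : B ∈ S.T) (c : ℂ) :
    actW S M (c • B) = c • actW S M B := by
  ext1 w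
  apply Subtype.ext
  rw [actW_apply S M (Subalgebra.smul_mem _ hB c), LinearMap.smul_apply, Submodule.coe_smul,
    actW_apply S M hB, Matrix.smul_mulVec]

lemma actW_ne (S : TSetup X) (M : TMod S) {B : Matrix X X ℂ} (hB : B ∈ S.T)
    (h : M.W.map B.mulVecLin ≠ ⊥) : actW S M B ≠ 0 := by
  intro h0
  apply h
  rw [Submodule.eq_bot_iff]
  rintro _ ⟨w, hw, rfl⟩
  have := actW_apply S M hB ⟨w, hw⟩
  rw [h0] at this
  simpa using this.symm

lemma actW_irr (S : TSetup X) (M : TMod S) (U : Submodule ℂ M.W)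
    (h1 : ∀ w ∈ U, actW S M S.A w ∈ U) (h2 : ∀ w ∈ U, actW S M S.Astar w ∈ U) :
    U = ⊥ ∨ U = ⊤ := by
  have hall : ∀ B ∈ S.T, ∀ w ∈ U, actW S M B w ∈ U := by
    intro B hB
    induction hB using Algebra.adjoin_induction with
    | mem B hB =>
      rcases hB with rfl | rfl
      · exact h1
      · exact h2
    | algebraMap c =>
      intro w hw
      have : actW S M (algebraMap ℂ _ c) w = c • w := by
        apply Subtype.ext
        rw [actW_apply S M (Subalgebra.algebraMap_mem _ c), Algebra.algebraMap_eq_smul_one,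
          Matrix.smul_mulVec, Matrix.one_mulVec]
        rfl
      rw [this]; exact U.smul_mem _ hw
    | add B C hB hC ihB ihC =>
      intro w hw
      have : actW S M (B + C) w = actW S M B w + actW S M C w := by
        apply Subtype.ext
        rw [actW_apply S M (Subalgebra.add_mem _ hB hC), Submodule.coe_add, actW_apply S M hB,
          actW_apply S M hC, Matrix.add_mulVec]
      rw [this]; exact U.add_mem (ihB w hw) (ihC w hw)
    | mul B C hB hC ihB ihC =>
      intro w hw
      rw [actW_mul S M hB hC]
      exact ihB _ (ihC w hw)
  have hU := M.hWirr (U.map M.W.subtype) (Submodule.map_subtype_le _ _) ?_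
  · rcases hU with h | h
    · left
      rw [Submodule.eq_bot_iff]
      intro w hw
      have hm : (w : X → ℂ) ∈ U.map M.W.subtype := ⟨w, hw, rfl⟩
      rw [h, Submodule.mem_bot] at hm
      exact Subtype.ext hm
    · right
      rw [eq_top_iff]
      rintro ⟨w, hw⟩ -
      have hw' := hw
      rw [← h] at hw'
      obtain ⟨u, hu, hu'⟩ := hw'
      have : u = ⟨w, hw⟩ := Subtype.ext hu'
      rw [← this]; exact hu
  · rintro B hB _ ⟨w, hw, rfl⟩
    exact ⟨actW S M B w, hall B hB w hw, actW_apply S M hB w⟩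

lemma finrank_W (S : TSetup X) (M : TMod S) : Module.finrank ℂ M.W = M.d + 1 := by
  have hmem : ∀ i, M.W.map (S.Estar i).mulVecLin ≤ M.W := by
    rintro i _ ⟨w, hw, rfl⟩
    exact M.hWinv _ (Estar_mem S i) w hw
  have hone : ∀ i : Fin (M.d + 1), ∃ v : X → ℂ, v ≠ 0 ∧ v ∈ M.W ∧ S.Estar (M.r + i) *ᵥ v = v ∧
      ∀ w ∈ M.W, ∃ c : ℂ, c • v = S.Estar (M.r + i) *ᵥ w := by
    intro i
    have hne := (M.hr (M.r + i)).2 ⟨by omega, by omega⟩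
    have hle := M.hthin (M.r + i)
    obtain ⟨v, hv, hv0⟩ := Submodule.exists_mem_ne_zero_of_ne_bot hne
    refine ⟨v, hv0, hmem _ hv, ?_, ?_⟩
    · obtain ⟨w, hw, rfl⟩ := hv
      have h2 := Estar_idem S (M.r + i) (M.r + i)
      rw [if_pos rfl] at h2
      simp only [Matrix.mulVecLin_apply, Matrix.mulVec_mulVec, h2]
    · intro w hw
      have h1 : Module.finrank ℂ (M.W.map (S.Estar (M.r + i)).mulVecLin) = 1 := by
        have : 0 < Module.finrank ℂ (M.W.map (S.Estar (M.r + i)).mulVecLin) := by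
          rw [Module.finrank_pos_iff]
          exact (Submodule.nontrivial_iff_ne_bot).2 hne
        omega
      have h2 := (finrank_eq_one_iff_of_nonzero' (⟨v, hv⟩ : M.W.map (S.Estar (M.r + i)).mulVecLin)
        (by simpa using hv0)).1 h1 ⟨S.Estar (M.r + i) *ᵥ w, ⟨w, hw, rfl⟩⟩
      obtain ⟨c, hc⟩ := h2
      exact ⟨c, congrArg Subtype.val hc⟩
  choose v hv0 hvW hvE hvs using hone
  have hli : LinearIndependent ℂ v := by
    rw [Fintype.linearIndependent_iff]
    intro g hg i
    have h2 := congrArg (S.Estar (M.r + i)).mulVecLin hg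
    have h3 : ∀ j, S.Estar (M.r + i) *ᵥ v j = if i = j then v j else 0 := by
      intro j
      conv_lhs => rw [← hvE j]
      rw [Matrix.mulVec_mulVec, Estar_idem]
      by_cases hij : i = j
      · subst hij; simp [hvE]
      · have : ¬ (M.r + (i : ℕ) = M.r + j) := by
          intro h; apply hij; apply Fin.ext; omega
        rw [if_neg this, if_neg hij]; simp
    simp only [map_sum, map_smul, Matrix.mulVecLin_apply, h3, map_zero] at h2
    simpa [hv0] using h2
  have hspan : Submodule.span ℂ (Set.range v) = M.W := by
    apply le_antisymm
    · rw [Submodule.span_le]; rintro _ ⟨i, rfl⟩; exact hvW i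
    · intro w hw
      have : w = ∑ i ∈ Finset.range (S.D + 1), S.Estar i *ᵥ w := by
        rw [← Matrix.sum_mulVec, Estar_sum, Matrix.one_mulVec]
      rw [this]
      refine Submodule.sum_mem _ fun k _ => ?_
      by_cases hk : M.r ≤ k ∧ k ≤ M.r + M.d
      · obtain ⟨c, hc⟩ := hvs ⟨k - M.r, by omega⟩ w hw
        have e : M.r + (k - M.r) = k := by omega
        simp only [e] at hc
        rw [← hc]
        exact Submodule.smul_mem _ _ (Submodule.subset_span ⟨_, rfl⟩)
      · have h0 : M.W.map (S.Estar k).mulVecLin = ⊥ := by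
          by_contra h
          exact hk ((M.hr k).1 h)
        have : S.Estar k *ᵥ w ∈ M.W.map (S.Estar k).mulVecLin := ⟨w, hw, rfl⟩
        rw [h0, Submodule.mem_bot] at this
        rw [this]; exact Submodule.zero_mem _
  rw [← hspan, finrank_span_eq_card hli]
  simp

end AWD

open AWD
theorem stmt16 (S : TSetup X) (M : TMod S) (hd : 0 < M.d) :
    ∀ i ≤ M.d, ∀ j ≤ M.d,
      (pW S M i).eval ((S.θ (M.t + j) : ℂ)) / (pW S M i).eval ((S.θ M.t : ℂ)) =
        (pstarW S M j).eval ((S.θstar (M.r + i) : ℂ))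
          / (pstarW S M j).eval ((S.θstar M.r : ℂ)) := by
  have hEm := E_mem S
  have hEsm := Estar_mem S
  have hAm := A_mem S
  have hAsm := Astar_mem S
  obtain ⟨v, N, hv1, hv2, hNa, hNx, hNt, hNn⟩ := exists_basis (fun i => actW S M (S.Estar i))
    (actW S M S.A) (actW S M S.Astar) M.r M.d (fun i => (S.θstar i : ℂ))
    (by
      intro i j
      rw [← actW_mul S M (hEsm i) (hEsm j), Estar_idem]
      split_ifs
      · rfl
      · exact actW_zero S M)
    (fun i hi => actW_ne S M (hEsm _) ((M.hr _).2 ⟨by omega, by omega⟩))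
    (finrank_W S M)
    (by
      intro i j hij
      rw [← actW_mul S M (hEsm i) hAm, ← actW_mul S M (Subalgebra.mul_mem _ (hEsm i) hAm) (hEsm j),
        Estar_A_Estar S i j hij, actW_zero])
    (by
      intro i
      rw [← actW_mul S M hAsm (hEsm i), spec_mul S.D S.Estar S.θstar (Estar_idem S) S.hEstarzero
        S.Astar S.hAstarspec, actW_smul S M (hEsm i)])
    (fun U h1 h2 => actW_irr S M U h1 h2)
  obtain ⟨u, N', hu1, hu2, hNa', hNx', hNt', hNn'⟩ := exists_basis (fun i => actW S M (S.E i))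
    (actW S M S.Astar) (actW S M S.A) M.t M.d (fun i => (S.θ i : ℂ))
    (by
      intro i j
      rw [← actW_mul S M (hEm i) (hEm j), E_idem]
      split_ifs
      · rfl
      · exact actW_zero S M)
    (fun i hi => actW_ne S M (hEm _) ((M.ht _).2 ⟨by omega, by omega⟩))
    (finrank_W S M)
    (by
      intro i j hij
      rw [← actW_mul S M (hEm i) hAsm, ← actW_mul S M (Subalgebra.mul_mem _ (hEm i) hAsm) (hEm j),
        E_Astar_E S i j hij, actW_zero])
    (by
      intro i
      rw [← actW_mul S M hAm (hEm i), spec_mul S.D S.E S.θ (E_idem S) S.hEzero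
        S.A S.hAspec, actW_smul S M (hEm i)])
    (fun U h1 h2 => actW_irr S M U h2 h1)
  -- transition coefficients
  let P : ℕ → ℕ → ℂ := fun j i => u.coord (Fin.ofNat _ j) (v (Fin.ofNat _ i))
  have hof : ∀ k : Fin (M.d + 1), Fin.ofNat (M.d + 1) (k : ℕ) = k := by intro k; simp
  have hlift : ∀ i, i ≤ M.d → ((Fin.ofNat (M.d + 1) i : Fin (M.d + 1)) : ℕ) = i := by
    intro i hi
    simp [Fin.ofNat, Nat.mod_eq_of_lt (show i < M.d + 1 by omega)]
  have hcoordA : ∀ (j : Fin (M.d + 1)) (w : M.W),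
      u.coord j (actW S M S.A w) = (S.θ (M.t + j) : ℂ) * u.coord j w := by
    intro j w
    conv_lhs => rw [← u.sum_repr w]
    simp only [map_sum, map_smul, hu1]
    simp [Finsupp.single_apply, mul_comm]
  have hcoordAs : ∀ (j : Fin (M.d + 1)) (w : M.W),
      u.coord j (actW S M S.Astar w) = ∑ k : Fin (M.d + 1), N' j k * u.coord k w := by
    intro j w
    conv_lhs => rw [← u.sum_repr w]
    simp only [map_sum, map_smul, hu2]
    simp [Finsupp.single_apply, mul_comm]
  have hP1 : ∀ j ≤ M.d, ∀ i ≤ M.d, (S.θ (M.t + j) : ℂ) * P j i =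
      ∑ k ∈ Finset.range (M.d + 1), N k i * P j k := by
    intro j hj i hi
    have h := hcoordA (Fin.ofNat _ j) (v (Fin.ofNat _ i))
    rw [hv2, hlift j hj, hlift i hi] at h
    rw [Finset.sum_range]
    simp only [P, hof]
    rw [← h]
    simp
  have hP2 : ∀ i ≤ M.d, ∀ j ≤ M.d, (S.θstar (M.r + i) : ℂ) * P j i =
      ∑ k ∈ Finset.range (M.d + 1), N' j k * P k i := by
    intro i hi j hj
    have h := hcoordAs (Fin.ofNat _ j) (v (Fin.ofNat _ i))
    rw [hv1, hlift j hj, hlift i hi] at h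
    rw [Finset.sum_range]
    simp only [P, hof]
    rw [← h]
    simp
  have R1 : ∀ j ≤ M.d, ∀ i ≤ M.d, (∏ k ∈ Finset.range i, N (k + 1) k) * P j i =
      (pW S M i).eval (S.θ (M.t + j) : ℂ) * P j 0 := by
    intro j hj
    refine scalar_rec M.d (aW S M) (xW S M) (fun i => (pW S M i).eval (S.θ (M.t + j) : ℂ))
      (P j) _ (fun a b => N b a) ?_ ?_ ?_ ?_ ?_ ?_ (hP1 j hj)
    · simp [pW]
    · simp [pW]
    · intro n; simp [pW]
    · intro i hi
      rw [← hNa i hi, aW, trW, actW_mul S M (hEsm _) hAm]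
    · intro n hn
      rw [← hNx n hn, xW, if_neg (by omega), trW,
        show M.r + (n + 1) - 1 = M.r + n by omega,
        actW_mul S M (Subalgebra.mul_mem _ (Subalgebra.mul_mem _ (hEsm _) hAm) (hEsm _)) hAm,
        actW_mul S M (Subalgebra.mul_mem _ (hEsm _) hAm) (hEsm _), actW_mul S M (hEsm _) hAm]
    · intro a b ha hb hab
      exact hNt b a hb ha hab.symm
  have R2 : ∀ i ≤ M.d, ∀ j ≤ M.d, (∏ k ∈ Finset.range j, N' k (k + 1)) * P j i =
      (pstarW S M j).eval (S.θstar (M.r + i) : ℂ) * P 0 i := by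
    intro i hi
    refine scalar_rec M.d (astarW S M) (xstarW S M)
      (fun j => (pstarW S M j).eval (S.θstar (M.r + i) : ℂ))
      (fun j => P j i) _ N' ?_ ?_ ?_ ?_ ?_ ?_ (hP2 i hi)
    · simp [pstarW]
    · simp [pstarW]
    · intro n; simp [pstarW]
    · intro i hi
      rw [← hNa' i hi, astarW, trW, actW_mul S M (hEm _) hAsm]
    · intro n hn
      rw [mul_comm, ← hNx' n hn, xstarW, if_neg (by omega), trW,
        show M.t + (n + 1) - 1 = M.t + n by omega,
        actW_mul S M (Subalgebra.mul_mem _ (Subalgebra.mul_mem _ (hEm _) hAsm) (hEm _)) hAsm,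
        actW_mul S M (Subalgebra.mul_mem _ (hEm _) hAsm) (hEm _), actW_mul S M (hEm _) hAsm]
    · exact hNt'
  have hB : ∀ i ≤ M.d, (∏ k ∈ Finset.range i, N (k + 1) k) ≠ 0 := by
    intro i hi
    refine Finset.prod_ne_zero_iff.2 fun k hk => ?_
    simp only [Finset.mem_range] at hk
    exact (hNn k (by omega)).1
  have hB' : ∀ i ≤ M.d, (∏ k ∈ Finset.range i, N' k (k + 1)) ≠ 0 := by
    intro i hi
    refine Finset.prod_ne_zero_iff.2 fun k hk => ?_
    simp only [Finset.mem_range] at hk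
    exact (hNn' k (by omega)).2
  have hPj0 : ∀ j ≤ M.d, P j 0 ≠ 0 := by
    intro j hj h0
    have hz : u.coord (Fin.ofNat _ j) = 0 := by
      apply v.ext
      intro i
      have h := R1 j hj i (by omega)
      rw [h0, mul_zero] at h
      have h' := (mul_eq_zero.1 h).resolve_left (hB i (by omega))
      simp only [P, hof] at h'
      rw [h', LinearMap.zero_apply]
    have := congrArg (fun f => f (u (Fin.ofNat _ j))) hz
    simp at this
  have hP0i : ∀ i ≤ M.d, P 0 i ≠ 0 := by
    intro i hi h0
    have hz : v (Fin.ofNat _ i) = 0 := by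
      apply u.ext_elem
      intro j
      have h := R2 i hi j (by omega)
      rw [h0, mul_zero] at h
      have h' := (mul_eq_zero.1 h).resolve_left (hB' j (by omega))
      simp only [P, hof] at h'
      simpa using h'
    exact v.ne_zero _ hz
  intro i hi j hj
  have a1 := R1 j hj i hi
  have a2 := R1 0 (by omega) i hi
  have b1 := R2 i hi j hj
  have b2 := R2 0 (by omega) j hj
  simp only [Nat.add_zero] at a2 b2
  have n1 : (pW S M i).eval ((S.θ M.t : ℂ)) ≠ 0 := by
    intro h; rw [h, zero_mul] at a2
    exact mul_ne_zero (hB i hi) (hP0i i hi) a2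
  have n2 : (pstarW S M j).eval ((S.θstar M.r : ℂ)) ≠ 0 := by
    intro h; rw [h, zero_mul] at b2
    exact mul_ne_zero (hB' j hj) (hPj0 j hj) b2
  have c1 := hB i hi
  have c2 := hB' j hj
  have c3 := hPj0 j hj
  have c4 := hP0i i hi
  have c5 := hPj0 0 (by omega)
  have f1 : (pW S M i).eval ((S.θ (M.t + j) : ℂ)) / (pW S M i).eval ((S.θ M.t : ℂ)) =
      P j i * P 0 0 / (P j 0 * P 0 i) := by
    rw [div_eq_div_iff n1 (mul_ne_zero c3 c4)]
    apply mul_left_cancel₀ (mul_ne_zero c1 c5)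
    linear_combination (-(P 0 i) * P 0 0 * (∏ k ∈ Finset.range i, N (k + 1) k)) * a1 +
      P j i * P 0 0 * (∏ k ∈ Finset.range i, N (k + 1) k) * a2
  have f2 : (pstarW S M j).eval ((S.θstar (M.r + i) : ℂ)) /
      (pstarW S M j).eval ((S.θstar M.r : ℂ)) = P j i * P 0 0 / (P j 0 * P 0 i) := by
    rw [div_eq_div_iff n2 (mul_ne_zero c3 c4)]
    apply mul_left_cancel₀ (mul_ne_zero c2 c5)
    linear_combination (-(P j 0) * P 0 0 * (∏ k ∈ Finset.range j, N' k (k + 1))) * b1 +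
      P j i * P 0 0 * (∏ k ∈ Finset.range j, N' k (k + 1)) * b2
  rw [f1, f2]
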